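/- Let F : ℝ^m → ℝ be L-smooth and let (z_k) be generated by z_{k+1} = z_k + t_k s_k with step sizes t_k > 0, inexact gradients g_k satisfying ‖g_k − ∇F(z_k)‖₂ ≤ δ_k, and directions satisfying c₁‖g_k‖₂² ≤ −g_kᵀ s_k and ‖s_k‖₂ ≤ c₂‖g_k‖₂ for constants c₁, c₂ > 0, where the nonnegative tolerance sequence (δ_k) is summable. If Σ_{k=0}^{∞} t_k ‖g_k‖₂² < ∞ and liminf_{k→∞} ‖g_k‖₂ = 0, then lim_{k→∞} ‖g_k‖₂ = 0. -/

import Mathlib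

open scoped RealInnerProductSpace

/-- real sequence core: steps are controlled by a summable error when above a threshold. -/
theorem seq_core (a : ℕ → ℝ) (ha : ∀ k, 0 ≤ a k)
    (h : ∀ ε : ℝ, 0 < ε → ∃ e : ℕ → ℝ, (∀ k, 0 ≤ e k) ∧ Summable e ∧
      ∀ k, ε ≤ a k → |a (k + 1) - a k| ≤ e k)
    (hl : Filter.liminf a Filter.atTop = 0) :
    Filter.Tendsto a Filter.atTop (nhds 0) := by
  have hfreq : ∀ ε : ℝ, 0 < ε → ∀ N, ∃ n, N ≤ n ∧ a n < ε := by
    intro ε hε N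
    by_contra! hcon
    obtain ⟨e, he0, hes, he⟩ := h ε hε
    have hub : ∀ n, N ≤ n → a n ≤ a N + ∑ i ∈ Finset.range n, e i := by
      intro n hn
      induction n, hn using Nat.le_induction with
      | base =>
        have := Finset.sum_nonneg (fun i (_ : i ∈ Finset.range N) => he0 i)
        linarith
      | succ n hn ih =>
        have := (abs_le.mp (he n (hcon n hn))).2
        rw [Finset.sum_range_succ]
        linarith
    have hbdd : BddAbove {x : ℝ | ∀ᶠ n in Filter.atTop, x ≤ a n} := by
      refine ⟨a N + ∑' i, e i, ?_⟩
      intro x hx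
      obtain ⟨n, hn1, hn2⟩ := (hx.and (Filter.eventually_ge_atTop N)).exists
      have h1 := hub n hn2
      have h2 := hes.sum_le_tsum (Finset.range n) (fun i _ => he0 i)
      linarith
    rw [Filter.liminf_eq] at hl
    have := le_csSup hbdd (show ε ∈ {x : ℝ | ∀ᶠ n in Filter.atTop, x ≤ a n} from
      Filter.eventually_atTop.mpr ⟨N, hcon⟩)
    linarith
  rw [Metric.tendsto_atTop]
  intro η hη
  obtain ⟨e, he0, hes, he⟩ := h (η / 2) (by linarith)
  have hev := hes.hasSum.tendsto_sum_nat.eventually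
    (lt_mem_nhds (show (∑' i, e i) - η / 2 < ∑' i, e i by linarith))
  obtain ⟨N, hN⟩ := Filter.eventually_atTop.mp hev
  refine ⟨N, fun n hn => ?_⟩
  rw [Real.dist_eq, sub_zero, abs_of_nonneg (ha n)]
  by_contra! hcon
  have hSn := hN n hn
  have hlow : ∀ j, n ≤ j → a n + ∑ i ∈ Finset.range n, e i ≤ a j + ∑ i ∈ Finset.range j, e i := by
    intro j hj
    induction j, hj using Nat.le_induction with
    | base => exact le_rfl
    | succ j hj ih =>
      have h2 := hes.sum_le_tsum (Finset.range j) (fun i _ => he0 i)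
      have := (abs_le.mp (he j (by linarith))).1
      rw [Finset.sum_range_succ]
      linarith
  obtain ⟨j, hj1, hj2⟩ := hfreq (η / 2) (by linarith) n
  have h1 := hlow j hj1
  have h2 := hes.sum_le_tsum (Finset.range j) (fun i _ => he0 i)
  linarith

/-- if the weighted squared gradient norms are summable and the liminf of the
inexact gradient norms is zero, then the inexact gradient norms converge to zero. -/
theorem stmt_9 (m : ℕ) (F : EuclideanSpace ℝ (Fin m) → ℝ) (L : ℝ)
    (hdiff : Differentiable ℝ F)
    (hlip : ∀ x y : EuclideanSpace ℝ (Fin m), ‖gradient F x - gradient F y‖ ≤ L * ‖x - y‖)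
    (z s g : ℕ → EuclideanSpace ℝ (Fin m)) (t δ : ℕ → ℝ)
    (c₁ c₂ : ℝ) (hc₁ : 0 < c₁) (hc₂ : 0 < c₂)
    (ht : ∀ k, 0 < t k) (hδ : ∀ k, 0 ≤ δ k)
    (hδsum : Summable δ)
    (hupd : ∀ k, z (k + 1) = z k + t k • s k)
    (herr : ∀ k, ‖g k - gradient F (z k)‖ ≤ δ k)
    (hdesc : ∀ k, c₁ * ‖g k‖ ^ 2 ≤ -⟪g k, s k⟫)
    (hbnd : ∀ k, ‖s k‖ ≤ c₂ * ‖g k‖)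
    (hsum : Summable (fun k => t k * ‖g k‖ ^ 2))
    (hliminf : Filter.liminf (fun k => ‖g k‖) Filter.atTop = 0) :
    Filter.Tendsto (fun k => ‖g k‖) Filter.atTop (nhds 0) := by
  refine seq_core (fun k => ‖g k‖) (fun k => norm_nonneg _) ?_ hliminf
  intro ε hε
  have hK : (0 : ℝ) ≤ |L| * c₂ / ε := by positivity
  refine ⟨fun k => |L| * c₂ / ε * (t k * ‖g k‖ ^ 2) + (δ k + δ (k + 1)), ?_, ?_, ?_⟩
  · intro k
    have h1 := hδ k
    have h2 := hδ (k + 1)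
    have h3 := (ht k).le
    positivity
  · exact (hsum.mul_left _).add (hδsum.add ((summable_nat_add_iff 1).mpr hδsum))
  · intro k hk
    have hk' : ε ≤ ‖g k‖ := hk
    have h1 : |‖g (k + 1)‖ - ‖g k‖| ≤ ‖g (k + 1) - g k‖ := abs_norm_sub_norm_le _ _
    have h2 : g (k + 1) - g k = (g (k + 1) - gradient F (z (k + 1)))
        + (gradient F (z (k + 1)) - gradient F (z k)) - (g k - gradient F (z k)) := by abel
    have h3 : ‖g (k + 1) - g k‖ ≤ ‖g (k + 1) - gradient F (z (k + 1))‖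
        + ‖gradient F (z (k + 1)) - gradient F (z k)‖ + ‖g k - gradient F (z k)‖ := by
      rw [h2]
      exact (norm_sub_le _ _).trans (by gcongr; exact norm_add_le _ _)
    have h4 := hlip (z (k + 1)) (z k)
    have h5 : ‖z (k + 1) - z k‖ ≤ t k * (c₂ * ‖g k‖) := by
      rw [hupd k, add_sub_cancel_left, norm_smul, Real.norm_eq_abs, abs_of_pos (ht k)]
      exact mul_le_mul_of_nonneg_left (hbnd k) (ht k).le
    have h6 : L * ‖z (k + 1) - z k‖ ≤ |L| * (t k * (c₂ * ‖g k‖)) := by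
      have := le_abs_self L
      gcongr
    have h7 : |L| * (t k * (c₂ * ‖g k‖)) ≤ |L| * c₂ / ε * (t k * ‖g k‖ ^ 2) := by
      have h8 : |L| * c₂ / ε * (t k * ‖g k‖ ^ 2)
          = |L| * (t k * (c₂ * ‖g k‖)) * (‖g k‖ / ε) := by
        field_simp
      rw [h8]
      have h9 : 1 ≤ ‖g k‖ / ε := (one_le_div hε).mpr hk'
      have h10 := (ht k).le
      exact le_mul_of_one_le_right (by positivity) h9
    have e1 := herr k
    have e2 := herr (k + 1)
    show |‖g (k + 1)‖ - ‖g k‖| ≤ |L| * c₂ / ε * (t k * ‖g k‖ ^ 2) + (δ k + δ (k + 1))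
    linarith
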